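/- Let γ ∈ (0, 1) and β ≥ 0, and define the shifted ramp loss φ_β(α) := min{1, max{0, (1 − α + β)/2}}. Then φ_β is (φ_γ, [−1, 1])-calibrated if and only if 0 < β < 2. -/

import Mathlib

/-- Class-conditional risk of a margin-based loss `φ`:
`C_φ(α, η) = η φ(α) + (1 - η) φ(-α)`. -/
noncomputable def ccr (φ : ℝ → ℝ) (α η : ℝ) : ℝ := η * φ α + (1 - η) * φ (-α)

/-- Minimal class-conditional risk over a set `A` of achievable prediction values. -/
noncomputable def ccrStar (φ : ℝ → ℝ) (A : Set ℝ) (η : ℝ) : ℝ :=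
  sInf ((fun α => ccr φ α η) '' A)

/-- Excess class-conditional risk. -/
noncomputable def ccrExcess (φ : ℝ → ℝ) (A : Set ℝ) (α η : ℝ) : ℝ :=
  ccr φ α η - ccrStar φ A η

/-- `φ` is `(ψ, A)`-calibrated. -/
def Calibrated (φ ψ : ℝ → ℝ) (A : Set ℝ) : Prop :=
  ∀ ε > (0:ℝ), ∃ δ > (0:ℝ), ∀ η ∈ Set.Icc (0:ℝ) 1, ∀ α ∈ A,
    ccr φ α η < ccrStar φ A η + δ → ccr ψ α η < ccrStar ψ A η + ε

/-- The `γ`-robust 0-1 loss `φ_γ(α) = 1{α ≤ γ}` (the 0-1 loss is the case `γ = 0`). -/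
noncomputable def robustLoss (γ : ℝ) (α : ℝ) : ℝ := if α ≤ γ then 1 else 0

/-- Quasiconcavity of a real function on ℝ. -/
def QuasiconcaveFn (h : ℝ → ℝ) : Prop :=
  ∀ α₁ α₂ l : ℝ, 0 ≤ l → l ≤ 1 → min (h α₁) (h α₂) ≤ h (l * α₁ + (1 - l) * α₂)

/-- `φ` is quasiconcave even if its even part `α ↦ φ(α) + φ(-α)` is quasiconcave. -/
def QuasiconcaveEven (φ : ℝ → ℝ) : Prop := QuasiconcaveFn (fun α => φ α + φ (-α))

/-!
For `η ≥ 1 / 2` the risk `C_φ(α, η) = (2η - 1) φ(α) + (1 - η) (φ(α) + φ(-α))` is a nonnegative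
combination of the loss and its even part, and `η ≤ 1 / 2` reduces to this case by negating `α`.
On `[-r, r]` a nonincreasing loss whose even part is nonincreasing in `|α|` minimizes both terms at
`α = r`, and so does the robust loss. Let `m` be the drop of the even part of `φ` from `γ` to `r`.
Both terms of the `φ`-risk exceed their minimum by at least `m` times what the corresponding term
of the robust risk does, so the excess risks compare linearly when `m > 0`. If `m = 0`, then `γ`
minimizes the `φ`-risk at `η = 1 / 2` without minimizing the robust risk. The shifted ramp loss has
such an even part when `β ≥ 0`; when `β ≤ 0`, its even part is minimal at `0`, which rules out
calibration in the same way.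
-/

theorem ccr_neg_one_sub (φ : ℝ → ℝ) (α η : ℝ) : ccr φ (-α) (1 - η) = ccr φ α η := by
  simp only [ccr, neg_neg]
  ring

theorem ccrStar_eq_of_isMinOn {φ : ℝ → ℝ} {A : Set ℝ} {a η : ℝ} (ha : a ∈ A)
    (hmin : IsMinOn (fun α => ccr φ α η) A a) : ccrStar φ A η = ccr φ a η :=
  IsLeast.csInf_eq ⟨Set.mem_image_of_mem _ ha, Set.forall_mem_image.2 hmin⟩

theorem ccrStar_one_sub (φ : ℝ → ℝ) {A : Set ℝ} (hA : ∀ α ∈ A, -α ∈ A) (η : ℝ) :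
    ccrStar φ A (1 - η) = ccrStar φ A η := by
  unfold ccrStar
  congr 1
  ext c
  constructor <;> rintro ⟨α, hα, rfl⟩
  · exact ⟨-α, hA α hα, by simpa using (ccr_neg_one_sub φ (-α) η).symm⟩
  · exact ⟨-α, hA α hα, ccr_neg_one_sub φ α η⟩

theorem ccrExcess_neg_one_sub (φ : ℝ → ℝ) {A : Set ℝ} (hA : ∀ α ∈ A, -α ∈ A) (α η : ℝ) :
    ccrExcess φ A (-α) (1 - η) = ccrExcess φ A α η := by
  rw [ccrExcess, ccrExcess, ccr_neg_one_sub, ccrStar_one_sub φ hA]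

theorem calibrated_of_mul_ccrExcess_le {φ ψ : ℝ → ℝ} {A : Set ℝ} {m : ℝ} (hm : 0 < m)
    (h : ∀ η ∈ Set.Icc (0 : ℝ) 1, ∀ α ∈ A, m * ccrExcess ψ A α η ≤ ccrExcess φ A α η) :
    Calibrated φ ψ A := by
  intro ε hε
  refine ⟨m * ε, mul_pos hm hε, fun η hη α hα hlt => ?_⟩
  have hφ : ccrExcess φ A α η < m * ε := sub_lt_iff_lt_add'.2 hlt
  have hψ : ccrExcess ψ A α η < ε := lt_of_mul_lt_mul_left ((h η hη α hα).trans_lt hφ) hm.le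
  exact sub_lt_iff_lt_add'.1 hψ

theorem Calibrated.ccr_le_ccrStar_of_isMinOn {φ ψ : ℝ → ℝ} {A : Set ℝ} {a η : ℝ}
    (h : Calibrated φ ψ A) (hη : η ∈ Set.Icc (0 : ℝ) 1) (ha : a ∈ A)
    (hmin : IsMinOn (fun α => ccr φ α η) A a) : ccr ψ a η ≤ ccrStar ψ A η := by
  refine le_of_forall_pos_lt_add fun ε hε => ?_
  obtain ⟨δ, hδ, hcal⟩ := h ε hε
  exact hcal η hη a ha (by linarith [ccrStar_eq_of_isMinOn ha hmin])

/-- The even part of a loss, without the usual factor `1 / 2`, as in `QuasiconcaveEven`.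
It is twice the class-conditional risk at `η = 1 / 2`. -/
def evenPart (φ : ℝ → ℝ) (α : ℝ) : ℝ := φ α + φ (-α)

theorem evenPart_abs (φ : ℝ → ℝ) (α : ℝ) : evenPart φ |α| = evenPart φ α := by
  rcases abs_choice α with h | h <;> simp only [evenPart, h, neg_neg, add_comm]

theorem ccr_eq_add_evenPart (φ : ℝ → ℝ) (α η : ℝ) :
    ccr φ α η = (2 * η - 1) * φ α + (1 - η) * evenPart φ α := by
  unfold ccr evenPart
  ring

theorem ccr_half (φ : ℝ → ℝ) (α : ℝ) : ccr φ α (1 / 2) = evenPart φ α / 2 := by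
  rw [ccr_eq_add_evenPart]
  ring

theorem isMinOn_ccr {φ : ℝ → ℝ} {A : Set ℝ} {a η : ℝ} (hη : η ∈ Set.Icc (1 / 2 : ℝ) 1)
    (hφ : IsMinOn φ A a) (heven : IsMinOn (evenPart φ) A a) :
    IsMinOn (fun α => ccr φ α η) A a := by
  have h₁ : 0 ≤ 2 * η - 1 := by linarith [hη.1]
  have h₂ : 0 ≤ 1 - η := sub_nonneg.2 hη.2
  refine isMinOn_iff.2 fun α hα => ?_
  rw [ccr_eq_add_evenPart, ccr_eq_add_evenPart]
  gcongr
  exacts [hφ hα, heven hα]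

theorem isMinOn_ccr_half {φ : ℝ → ℝ} {A : Set ℝ} {a : ℝ} (heven : IsMinOn (evenPart φ) A a) :
    IsMinOn (fun α => ccr φ α (1 / 2)) A a := by
  refine isMinOn_iff.2 fun α hα => ?_
  rw [ccr_half, ccr_half]
  exact div_le_div_of_nonneg_right (heven hα) zero_le_two

theorem isMinOn_of_mul_sub_le {X : Type*} {f g : X → ℝ} {A : Set X} {a : X} {m : ℝ} (hm : 0 ≤ m)
    (hg : IsMinOn g A a) (h : ∀ α ∈ A, m * (g α - g a) ≤ f α - f a) : IsMinOn f A a :=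
  fun α hα => sub_nonneg.1 ((mul_nonneg hm (sub_nonneg.2 (hg hα))).trans (h α hα))

section Comparison

variable {φ ψ : ℝ → ℝ} {A : Set ℝ} {a m : ℝ}

theorem mul_ccrExcess_le_of_half_le (hm : 0 ≤ m) (ha : a ∈ A)
    (hψ : IsMinOn ψ A a) (hψeven : IsMinOn (evenPart ψ) A a)
    (h : ∀ α ∈ A, m * (ψ α - ψ a) ≤ φ α - φ a)
    (heven : ∀ α ∈ A, m * (evenPart ψ α - evenPart ψ a) ≤ evenPart φ α - evenPart φ a)
    {α η : ℝ} (hη : η ∈ Set.Icc (1 / 2 : ℝ) 1) (hα : α ∈ A) :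
    m * ccrExcess ψ A α η ≤ ccrExcess φ A α η := by
  have hφ : IsMinOn φ A a := isMinOn_of_mul_sub_le hm hψ h
  have hφeven : IsMinOn (evenPart φ) A a := isMinOn_of_mul_sub_le hm hψeven heven
  have h₁ : 0 ≤ 2 * η - 1 := by linarith [hη.1]
  have h₂ : 0 ≤ 1 - η := sub_nonneg.2 hη.2
  rw [ccrExcess, ccrExcess, ccrStar_eq_of_isMinOn ha (isMinOn_ccr hη hψ hψeven),
    ccrStar_eq_of_isMinOn ha (isMinOn_ccr hη hφ hφeven)]
  simp only [ccr_eq_add_evenPart]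
  calc m * ((2 * η - 1) * ψ α + (1 - η) * evenPart ψ α
          - ((2 * η - 1) * ψ a + (1 - η) * evenPart ψ a))
      = (2 * η - 1) * (m * (ψ α - ψ a))
          + (1 - η) * (m * (evenPart ψ α - evenPart ψ a)) := by ring
    _ ≤ (2 * η - 1) * (φ α - φ a) + (1 - η) * (evenPart φ α - evenPart φ a) := by
      gcongr
      exacts [h α hα, heven α hα]
    _ = _ := by ring

theorem calibrated_of_mul_sub_le (hm : 0 < m) (hA : ∀ α ∈ A, -α ∈ A) (ha : a ∈ A)
    (hψ : IsMinOn ψ A a) (hψeven : IsMinOn (evenPart ψ) A a)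
    (h : ∀ α ∈ A, m * (ψ α - ψ a) ≤ φ α - φ a)
    (heven : ∀ α ∈ A, m * (evenPart ψ α - evenPart ψ a) ≤ evenPart φ α - evenPart φ a) :
    Calibrated φ ψ A := by
  have hhalf : ∀ η ∈ Set.Icc (1 / 2 : ℝ) 1, ∀ α ∈ A,
      m * ccrExcess ψ A α η ≤ ccrExcess φ A α η := fun η hη α hα =>
    mul_ccrExcess_le_of_half_le hm.le ha hψ hψeven h heven hη hα
  refine calibrated_of_mul_ccrExcess_le hm fun η hη α hα => ?_
  rcases le_total (1 / 2) η with hle | hle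
  · exact hhalf η ⟨hle, hη.2⟩ α hα
  · rw [← ccrExcess_neg_one_sub ψ hA, ← ccrExcess_neg_one_sub φ hA]
    exact hhalf (1 - η) ⟨by linarith, by linarith [hη.1]⟩ (-α) (hA α hα)

end Comparison

theorem robustLoss_antitone (γ : ℝ) : Antitone (robustLoss γ) := by
  intro x y hxy
  unfold robustLoss
  grind

theorem evenPart_robustLoss {γ : ℝ} (hγ : 0 ≤ γ) (α : ℝ) :
    evenPart (robustLoss γ) α = if |α| ≤ γ then 2 else 1 := by
  unfold evenPart robustLoss
  grind

theorem isMinOn_evenPart_robustLoss {γ b : ℝ} (hγ : 0 ≤ γ) (hb : γ < |b|) (A : Set ℝ) :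
    IsMinOn (evenPart (robustLoss γ)) A b := by
  refine isMinOn_iff.2 fun α _ => ?_
  rw [evenPart_robustLoss hγ, evenPart_robustLoss hγ, if_neg hb.not_ge]
  split_ifs <;> norm_num

theorem Calibrated.not_isMinOn_evenPart {φ : ℝ → ℝ} {A : Set ℝ} {γ a b : ℝ}
    (h : Calibrated φ (robustLoss γ) A) (hb : b ∈ A) (hγb : γ < |b|) (ha : a ∈ A)
    (haγ : |a| ≤ γ) : ¬ IsMinOn (evenPart φ) A a := by
  intro hmin
  have hγ : 0 ≤ γ := (abs_nonneg a).trans haγ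
  have hη : (1 / 2 : ℝ) ∈ Set.Icc (0 : ℝ) 1 := by norm_num
  have hstar : ccrStar (robustLoss γ) A (1 / 2) = ccr (robustLoss γ) b (1 / 2) :=
    ccrStar_eq_of_isMinOn hb (isMinOn_ccr_half (isMinOn_evenPart_robustLoss hγ hγb A))
  have hle : ccr (robustLoss γ) a (1 / 2) ≤ ccr (robustLoss γ) b (1 / 2) :=
    hstar ▸ h.ccr_le_ccrStar_of_isMinOn hη ha (isMinOn_ccr_half hmin)
  rw [ccr_half, ccr_half, evenPart_robustLoss hγ, evenPart_robustLoss hγ, if_pos haγ,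
    if_neg hγb.not_ge] at hle
  norm_num at hle

section Monotone

variable {φ : ℝ → ℝ} {γ r : ℝ}

theorem evenPart_le_of_abs_le (heven : AntitoneOn (evenPart φ) (Set.Icc 0 r)) {x y : ℝ}
    (hxy : |x| ≤ |y|) (hy : |y| ≤ r) : evenPart φ y ≤ evenPart φ x := by
  rw [← evenPart_abs φ x, ← evenPart_abs φ y]
  exact heven ⟨abs_nonneg x, hxy.trans hy⟩ ⟨abs_nonneg y, hy⟩ hxy

theorem evenPart_sub_evenPart_le (hγ : γ ∈ Set.Icc (-r) r) (hφ : AntitoneOn φ (Set.Icc (-r) r)) :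
    evenPart φ γ - evenPart φ r ≤ φ γ - φ r := by
  obtain ⟨hrγ, hγr⟩ := hγ
  have : φ (-γ) ≤ φ (-r) :=
    hφ ⟨le_rfl, by linarith⟩ ⟨by linarith, by linarith⟩ (by linarith)
  unfold evenPart
  linarith

theorem mul_robustLoss_sub_le (hγ : γ ∈ Set.Ico (-r) r) (hφ : AntitoneOn φ (Set.Icc (-r) r))
    {α : ℝ} (hα : α ∈ Set.Icc (-r) r) :
    (evenPart φ γ - evenPart φ r) * (robustLoss γ α - robustLoss γ r) ≤ φ α - φ r := by
  have hγ' : γ ∈ Set.Icc (-r) r := Set.Ico_subset_Icc_self hγ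
  have hmin : φ r ≤ φ α := hφ hα ⟨hα.1.trans hα.2, le_rfl⟩ hα.2
  rw [robustLoss, robustLoss, if_neg hγ.2.not_ge]
  split_ifs with hαγ
  · have : φ γ ≤ φ α := hφ hα hγ' hαγ
    linarith [evenPart_sub_evenPart_le hγ' hφ]
  · linarith

theorem mul_evenPart_robustLoss_sub_le (hγ : γ ∈ Set.Ico 0 r)
    (heven : AntitoneOn (evenPart φ) (Set.Icc 0 r)) {α : ℝ} (hα : |α| ≤ r) :
    (evenPart φ γ - evenPart φ r) * (evenPart (robustLoss γ) α - evenPart (robustLoss γ) r) ≤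
      evenPart φ α - evenPart φ r := by
  obtain ⟨hγ₀, hγr⟩ := hγ
  have hγabs : |γ| = γ := abs_of_nonneg hγ₀
  have hrabs : |r| = r := abs_of_pos (hγ₀.trans_lt hγr)
  rw [evenPart_robustLoss hγ₀, evenPart_robustLoss hγ₀, hrabs, if_neg hγr.not_ge]
  split_ifs with hαγ
  · have : evenPart φ γ ≤ evenPart φ α :=
      evenPart_le_of_abs_le heven (hαγ.trans_eq hγabs.symm) (hγabs.trans_le hγr.le)
    linarith
  · have : evenPart φ r ≤ evenPart φ α :=
      evenPart_le_of_abs_le heven (hα.trans_eq hrabs.symm) hrabs.le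
    linarith

theorem calibrated_robustLoss_of_evenPart_lt (hγ : γ ∈ Set.Ico 0 r)
    (hφ : AntitoneOn φ (Set.Icc (-r) r)) (heven : AntitoneOn (evenPart φ) (Set.Icc 0 r))
    (hlt : evenPart φ r < evenPart φ γ) :
    Calibrated φ (robustLoss γ) (Set.Icc (-r) r) := by
  obtain ⟨hγ₀, hγr⟩ := hγ
  have hr : 0 < r := hγ₀.trans_lt hγr
  have hneg : ∀ α ∈ Set.Icc (-r) r, -α ∈ Set.Icc (-r) r := fun α hα =>
    ⟨neg_le_neg hα.2, neg_le.1 hα.1⟩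
  exact calibrated_of_mul_sub_le (sub_pos.2 hlt) hneg ⟨by linarith, le_rfl⟩
    (fun α hα => robustLoss_antitone γ hα.2)
    (isMinOn_evenPart_robustLoss hγ₀ (by rwa [abs_of_pos hr]) _)
    (fun α hα => mul_robustLoss_sub_le ⟨by linarith, hγr⟩ hφ hα)
    (fun α hα => mul_evenPart_robustLoss_sub_le ⟨hγ₀, hγr⟩ heven (abs_le.2 hα))

/- For the even function `evenPart φ`, being nonincreasing on `[0, r]` amounts to being quasiconcave
on `[-r, r]`. -/
theorem calibrated_robustLoss_iff (hγ : γ ∈ Set.Ico 0 r)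
    (hφ : AntitoneOn φ (Set.Icc (-r) r)) (heven : AntitoneOn (evenPart φ) (Set.Icc 0 r)) :
    Calibrated φ (robustLoss γ) (Set.Icc (-r) r) ↔ evenPart φ r < evenPart φ γ := by
  refine ⟨fun hcal => ?_, calibrated_robustLoss_of_evenPart_lt hγ hφ heven⟩
  obtain ⟨hγ₀, hγr⟩ := hγ
  have habs : |r| = r := abs_of_pos (hγ₀.trans_lt hγr)
  by_contra! hle
  refine hcal.not_isMinOn_evenPart (a := γ) (b := r) ⟨by linarith, le_rfl⟩ (by rwa [habs])
    ⟨by linarith, hγr.le⟩ (abs_of_nonneg hγ₀).le fun α hα => hle.trans ?_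
  exact evenPart_le_of_abs_le heven (by rw [habs]; exact abs_le.2 hα) habs.le

end Monotone

/-- The ramp loss `min {1, max {0, (1 - α) / 2}}` shifted horizontally by `β`. -/
noncomputable def shiftedRamp (β α : ℝ) : ℝ := min 1 (max 0 ((1 - α + β) / 2))

theorem shiftedRamp_antitone (β : ℝ) : Antitone (shiftedRamp β) := by
  intro x y hxy
  unfold shiftedRamp
  gcongr

theorem evenPart_shiftedRamp {β t : ℝ} (hβ : 0 ≤ β) (ht : 0 ≤ t) :
    evenPart (shiftedRamp β) t = 1 + min β (shiftedRamp β t) := by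
  unfold evenPart shiftedRamp
  grind

theorem evenPart_shiftedRamp_antitoneOn {β : ℝ} (hβ : 0 ≤ β) :
    AntitoneOn (evenPart (shiftedRamp β)) (Set.Ici 0) := by
  intro s hs t ht hst
  rw [evenPart_shiftedRamp hβ hs, evenPart_shiftedRamp hβ ht]
  gcongr
  exact shiftedRamp_antitone β hst

theorem shiftedRamp_lt_shiftedRamp_iff {β s t : ℝ} (hst : s < t) :
    shiftedRamp β t < shiftedRamp β s ↔ β - 1 < t ∧ s < 1 + β := by
  unfold shiftedRamp
  grind

theorem shiftedRamp_lt_shift_iff {β t : ℝ} (hβ : 0 < β) (ht : 0 ≤ t) :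
    shiftedRamp β t < β ↔ 1 - β < t := by
  unfold shiftedRamp
  grind

theorem evenPart_shiftedRamp_lt_iff {β s t : ℝ} (hβ : 0 < β) (hs : 0 ≤ s) (hst : s < t) :
    evenPart (shiftedRamp β) t < evenPart (shiftedRamp β) s ↔ |1 - β| < t ∧ s < 1 + β := by
  have ht : 0 ≤ t := hs.trans hst.le
  calc evenPart (shiftedRamp β) t < evenPart (shiftedRamp β) s
      ↔ min β (shiftedRamp β t) < min β (shiftedRamp β s) := by
        rw [evenPart_shiftedRamp hβ.le ht, evenPart_shiftedRamp hβ.le hs, add_lt_add_iff_left]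
    _ ↔ shiftedRamp β t < β ∧ shiftedRamp β t < shiftedRamp β s := by grind
    _ ↔ 1 - β < t ∧ β - 1 < t ∧ s < 1 + β := by
        rw [shiftedRamp_lt_shift_iff hβ ht, shiftedRamp_lt_shiftedRamp_iff hst]
    _ ↔ |1 - β| < t ∧ s < 1 + β := by rw [abs_sub_lt_iff, and_assoc]

-- Where the cap at `1` is inactive the loss is convex; where it is active, `2 φ(0) ≤ 1` suffices.
theorem evenPart_shiftedRamp_zero_le {β : ℝ} (hβ : β ≤ 0) (α : ℝ) :
    evenPart (shiftedRamp β) 0 ≤ evenPart (shiftedRamp β) α := by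
  have hzero : evenPart (shiftedRamp β) 0 = max 0 (1 + β) := by
    unfold evenPart shiftedRamp
    grind
  rw [hzero]
  unfold evenPart shiftedRamp
  grind

theorem ramp_calibrated_iff_general {γ r : ℝ} (hγ : γ ∈ Set.Ico 0 r) (β : ℝ) :
    Calibrated (shiftedRamp β) (robustLoss γ) (Set.Icc (-r) r) ↔
      0 < β ∧ |1 - β| < r ∧ γ < 1 + β := by
  rcases le_or_gt β 0 with hβ | hβ
  · have hr : 0 < r := hγ.1.trans_lt hγ.2
    refine iff_of_false (fun hcal => ?_) fun h => hβ.not_gt h.1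
    exact hcal.not_isMinOn_evenPart (a := 0) (b := r) ⟨by linarith, le_rfl⟩
      (by rw [abs_of_pos hr]; exact hγ.2) ⟨by linarith, hr.le⟩ (by simpa using hγ.1)
      fun α _ => evenPart_shiftedRamp_zero_le hβ α
  · rw [calibrated_robustLoss_iff hγ ((shiftedRamp_antitone β).antitoneOn _)
      ((evenPart_shiftedRamp_antitoneOn hβ.le).mono Set.Icc_subset_Ici_self),
      evenPart_shiftedRamp_lt_iff hβ hγ.1 hγ.2, and_iff_right hβ]

/-- The shifted ramp loss is `(φ_γ, [-1,1])`-calibrated iff `0 < β < 2`. -/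
theorem ramp_calibrated_iff
    (γ : ℝ) (hγ : γ ∈ Set.Ioo (0:ℝ) 1) (β : ℝ) (hβ : 0 ≤ β) :
    Calibrated (fun α => min 1 (max 0 ((1 - α + β) / 2))) (robustLoss γ)
        (Set.Icc (-1:ℝ) 1) ↔ (0 < β ∧ β < 2) := by
  refine (ramp_calibrated_iff_general (Set.Ioo_subset_Ico_self hγ) β).trans ?_
  grind [abs_lt]
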